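/- Let Σ_A(ℕ) be a topologically mixing, finitely primitive (BIP) countable Markov shift and f : Σ_A(ℕ) → ℝ satisfy the Walters condition with Var_1 f < ∞ and P(f) < ∞. Suppose f has a unique maximizing measure μ and let I(x) = −Σ_{j=0}^∞ (f + V − V∘σ − m(f))(σ^j(x)) for a bounded calibrated sub-action V. Then the Aubry set coincides with the zero set of the deviation function: Ω(f,σ) = {x ∈ Σ_A(ℕ) : I(x) = 0}. -/

import Mathlib

open Filter Topology MeasureTheory
open scoped ENNReal

/-- The countable Markov shift over alphabet ℕ determined by the 0-1 matrix `A`. -/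
def MarkovShift (A : ℕ → ℕ → Bool) : Type :=
  {x : ℕ → ℕ // ∀ i, A (x i) (x (i + 1)) = true}

namespace MarkovShift

variable {A : ℕ → ℕ → Bool}

instance : TopologicalSpace (MarkovShift A) :=
  instTopologicalSpaceSubtype

instance : MeasurableSpace (MarkovShift A) := borel _

instance : BorelSpace (MarkovShift A) := ⟨rfl⟩

/-- The shift map. -/
def shift (x : MarkovShift A) : MarkovShift A :=
  ⟨fun n => x.1 (n + 1), fun i => x.2 (i + 1)⟩

/-- The cylinder set determined by a finite word. -/
def cylinder (w : List ℕ) : Set (MarkovShift A) :=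
  {x | ∀ i : Fin w.length, x.1 i = w.get i}

/-- The cylinder set determined by the first `m` coordinates of `x`. -/
def cylOf (x : MarkovShift A) (m : ℕ) : Set (MarkovShift A) :=
  {y | ∀ i < m, y.1 i = x.1 i}

/-- A symbol is admissible when its cylinder is nonempty. -/
def Admissible (A : ℕ → ℕ → Bool) (a : ℕ) : Prop :=
  ∃ x : MarkovShift A, x.1 0 = a

/-- Topologically mixing. -/
def TopologicallyMixing (A : ℕ → ℕ → Bool) : Prop :=
  ∀ a b : ℕ, Admissible A a → Admissible A b →
    ∃ N : ℕ, ∀ n ≥ N, ∃ x : MarkovShift A, x.1 0 = a ∧ (shift^[n] x).1 0 = b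

/-- Finitely primitive (BIP). -/
def FinitelyPrimitive (A : ℕ → ℕ → Bool) : Prop :=
  ∃ (K₀ : ℕ) (F : Finset ℕ), ∀ a b : ℕ, Admissible A a → Admissible A b →
    ∃ w : List ℕ, w.length = K₀ ∧ (∀ c ∈ w, c ∈ F) ∧
      List.Chain' (fun u v => A u v = true) (a :: (w ++ [b]))

/-- First coordinate where two distinct points disagree. -/
noncomputable def firstDiff (x y : MarkovShift A) (h : x ≠ y) : ℕ :=
  Nat.find (Function.ne_iff.mp (fun hxy : x.1 = y.1 => h (Subtype.ext hxy)))

open Classical in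
/-- The metric `d(x,y) = r^{t(x,y)}`. -/
noncomputable def dist' (r : ℝ) (x y : MarkovShift A) : ℝ :=
  if h : x = y then 0 else r ^ firstDiff x y h

/-- Birkhoff sum `S_n f`. -/
def birkhoff (f : MarkovShift A → ℝ) (n : ℕ) (x : MarkovShift A) : ℝ :=
  ∑ j ∈ Finset.range n, f (shift^[j] x)

/-- The set of values `|S_n f x - S_n f y|` over pairs agreeing on the first `m` coordinates. -/
def varSet (f : MarkovShift A → ℝ) (n m : ℕ) : Set ℝ :=
  {c | ∃ x y : MarkovShift A, (∀ i < m, x.1 i = y.1 i) ∧ c = |birkhoff f n x - birkhoff f n y|}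

/-- `Var_m (S_n f)`. -/
noncomputable def varBirk (f : MarkovShift A → ℝ) (n m : ℕ) : ℝ := sSup (varSet f n m)

/-- `Var_1 f < ∞`. -/
def Var1Finite (f : MarkovShift A → ℝ) : Prop := BddAbove (varSet f 1 1)

/-- The set whose supremum is `sup_{n ≥ 1} Var_{n+k}(S_n f)`. -/
def waltersSet (f : MarkovShift A → ℝ) (k : ℕ) : Set ℝ :=
  {c | ∃ n, 1 ≤ n ∧ c ∈ varSet f n (n + k)}

/-- `M_k = sup_{n ≥ 1} Var_{n+k}(S_n f)`. -/
noncomputable def waltersSup (f : MarkovShift A → ℝ) (k : ℕ) : ℝ := sSup (waltersSet f k)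

/-- The Walters condition. -/
def SatisfiesWalters (f : MarkovShift A → ℝ) : Prop :=
  (∀ k, 1 ≤ k → BddAbove (waltersSet f k)) ∧
    Tendsto (fun k => waltersSup f k) atTop (𝓝 0)

/-- The partition function `Z_n(f,a) = Σ_{σ^n x = x, x₀ = a} e^{S_n f (x)}`. -/
noncomputable def partitionSum (f : MarkovShift A → ℝ) (n : ℕ) (a : ℕ) : ℝ :=
  ∑' x : {x : MarkovShift A // shift^[n] x = x ∧ x.1 0 = a}, Real.exp (birkhoff f n x.1)

/-- `f` has (finite) Gurevich pressure `p`. -/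
def HasGurevichPressure (f : MarkovShift A → ℝ) (p : ℝ) : Prop :=
  ∀ a : ℕ, Admissible A a →
    (∀ n, 1 ≤ n → Summable fun x : {x : MarkovShift A // shift^[n] x = x ∧ x.1 0 = a} =>
        Real.exp (birkhoff f n x.1)) ∧
    Tendsto (fun n : ℕ => (1 / (n : ℝ)) * Real.log (partitionSum f n a)) atTop (𝓝 p)

/-- σ-invariant Borel probability measure. -/
def IsInvariantProb (μ : Measure (MarkovShift A)) : Prop :=
  IsProbabilityMeasure μ ∧ μ.map shift = μ

/-- `m(f)`, the maximal ergodic average. -/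
noncomputable def mf (f : MarkovShift A → ℝ) : ℝ :=
  sSup {c | ∃ μ : Measure (MarkovShift A),
    IsInvariantProb μ ∧ Integrable f μ ∧ ∫ x, f x ∂μ = c}

/-- A maximizing measure for `f`. -/
def IsMaximizing (f : MarkovShift A → ℝ) (μ : Measure (MarkovShift A)) : Prop :=
  IsInvariantProb μ ∧ Integrable f μ ∧ ∫ x, f x ∂μ = mf f

/-- Bounded real valued function. -/
def BoundedFun (g : MarkovShift A → ℝ) : Prop := ∃ C, ∀ x, |g x| ≤ C

/-- A bounded calibrated sub-action for `f`. -/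
def IsCalibratedSubaction (f V : MarkovShift A → ℝ) : Prop :=
  Continuous V ∧ BoundedFun V ∧
    (∀ x, f x + V x - V (shift x) - mf f ≤ 0) ∧
    (∀ y, ∃ x, shift x = y ∧ f x + V x - V (shift x) - mf f = 0)

/-- The Ruelle transfer operator `(L_g u)(x) = Σ_{σ y = x} e^{g(y)} u(y)`. -/
noncomputable def ruelle (g u : MarkovShift A → ℝ) (x : MarkovShift A) : ℝ :=
  ∑' y : {y : MarkovShift A // shift y = x}, Real.exp (g y.1) * u y.1

/-- Ruelle-Perron-Frobenius data for the potential `f` with pressure `p`: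
eigenfunction `h`, eigenmeasure `ν`. -/
def IsRPF (f : MarkovShift A → ℝ) (p : ℝ) (h : MarkovShift A → ℝ)
    (ν : Measure (MarkovShift A)) : Prop :=
  Continuous h ∧ (∀ x, 0 < h x) ∧
    (∀ x, ruelle f h x = Real.exp p * h x) ∧
    IsProbabilityMeasure ν ∧
    (∀ g : MarkovShift A → ℝ, Continuous g → BoundedFun g →
      ∫ x, ruelle f g x ∂ν = Real.exp p * ∫ x, g x ∂ν) ∧
    ∫ x, h x ∂ν = 1

/-- The Gibbs measure `dμ = h dν`. -/
noncomputable def gibbs (h : MarkovShift A → ℝ) (ν : Measure (MarkovShift A)) :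
    Measure (MarkovShift A) :=
  ν.withDensity fun x => ENNReal.ofReal (h x)

/-- The Mañé potential `S_f(x,y)` (with respect to the metric of parameter `r`). -/
noncomputable def manePot (r : ℝ) (f : MarkovShift A → ℝ) (x y : MarkovShift A) : EReal :=
  ⨅ ε : {ε : ℝ // 0 < ε}, ⨆ n : {n : ℕ // 1 ≤ n},
    ⨆ _z : {z : MarkovShift A // dist' r x z < ε.1 ∧ shift^[n.1] z = y},
      ((birkhoff (fun w => f w - mf f) n.1 _z.1 : ℝ) : EReal)

/-- The (topological) support of a measure. -/
def msupport (μ : Measure (MarkovShift A)) : Set (MarkovShift A) :=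
  {x | ∀ U : Set (MarkovShift A), IsOpen U → x ∈ U → 0 < μ U}

end MarkovShift

namespace MarkovShift

section Aux

/-- Krylov-Bogoliubov. -/
theorem aux_krylov {X : Type*} [TopologicalSpace X] [T2Space X] [CompactSpace X]
    [MeasurableSpace X] [BorelSpace X] [HasOuterApproxClosed X] (T : X → X) (hT : Continuous T)
    (x : X) : ∃ ν : Measure X, IsProbabilityMeasure ν ∧ ν.map T = ν := by
  classical
  have hprob : ∀ n : ℕ, IsProbabilityMeasure
      (((n : ℝ≥0∞) + 1)⁻¹ • ∑ j ∈ Finset.range (n + 1), Measure.dirac (T^[j] x)) := by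
    intro n
    constructor
    simp only [Measure.smul_apply, Measure.coe_finsetSum, Finset.sum_apply, measure_univ,
      Finset.sum_const, Finset.card_range, smul_eq_mul, nsmul_eq_mul, mul_one]
    push_cast
    exact ENNReal.inv_mul_cancel (by simp) (by simp)
  let P : ℕ → ProbabilityMeasure X := fun n => ⟨_, hprob n⟩
  have hint : ∀ (n : ℕ) (φ : X → ℝ), Continuous φ → ∫ y, φ y ∂(P n : Measure X) =
      ((n : ℝ) + 1)⁻¹ * ∑ j ∈ Finset.range (n + 1), φ (T^[j] x) := by
    intro n φ hφ
    change ∫ y, φ y ∂(((n : ℝ≥0∞) + 1)⁻¹ • ∑ j ∈ Finset.range (n + 1),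
      Measure.dirac (T^[j] x)) = _
    rw [integral_smul_measure, integral_finsetSum_measure]
    · have : ∀ y : X, ∫ z, φ z ∂(Measure.dirac y) = φ y := fun y =>
        integral_dirac' _ _ hφ.measurable.stronglyMeasurable
      simp only [this, smul_eq_mul]
      congr 1
      rw [ENNReal.toReal_inv, ENNReal.toReal_add (by simp) (by simp)]
      simp
    · intro i _
      exact (BoundedContinuousFunction.mkOfCompact ⟨φ, hφ⟩).integrable _
  obtain ⟨ν, -, hν⟩ := isCompact_univ.ultrafilter_le_nhds ((hyperfilter ℕ).map P) (by simp)
  have hν' : Tendsto P (hyperfilter ℕ) (𝓝 ν) := hν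
  rw [ProbabilityMeasure.tendsto_iff_forall_integral_tendsto] at hν'
  refine ⟨ν, inferInstance, ?_⟩
  have : IsProbabilityMeasure ((ν : Measure X).map T) :=
    Measure.isProbabilityMeasure_map hT.aemeasurable
  apply ext_of_forall_integral_eq_of_IsFiniteMeasure
  intro φ
  rw [integral_map hT.aemeasurable φ.continuous.measurable.aestronglyMeasurable]
  have h1 := hν' φ
  have h2 := hν' (φ.compContinuous ⟨T, hT⟩)
  have h3 := h2.sub h1
  have h4 : Tendsto (fun n : ℕ => 2 * ‖φ‖ * (1 / ((n : ℝ) + 1))) (hyperfilter ℕ : Filter ℕ)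
      (𝓝 0) := by
    have := (tendsto_one_div_add_atTop_nhds_zero_nat (𝕜 := ℝ)).const_mul (2 * ‖φ‖)
    rw [mul_zero] at this
    exact this.mono_left Nat.hyperfilter_le_atTop
  have h5 := squeeze_zero_norm (f := fun n : ℕ => (∫ ω, (φ.compContinuous ⟨T, hT⟩) ω ∂(P n : Measure X) -
      ∫ ω, φ ω ∂(P n : Measure X))) (fun n => ?_) h4
  · have := tendsto_nhds_unique h3 h5
    simpa [sub_eq_zero] using this
  · rw [hint n _ (φ.compContinuous ⟨T, hT⟩).continuous, hint n _ φ.continuous, ← mul_sub,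
      ← Finset.sum_sub_distrib]
    have : ∀ j, (φ.compContinuous ⟨T, hT⟩) (T^[j] x) = φ (T^[j+1] x) := by
      intro j
      simp [Function.iterate_succ_apply']
    simp only [this]
    rw [Finset.sum_range_sub (fun j => φ (T^[j] x)), norm_mul, norm_inv, mul_comm, one_div,
      Real.norm_of_nonneg (by positivity : (0:ℝ) ≤ n + 1)]
    gcongr
    calc _ ≤ ‖φ (T^[n+1] x)‖ + ‖φ (T^[0] x)‖ := norm_sub_le _ _
      _ ≤ ‖φ‖ + ‖φ‖ := add_le_add (φ.norm_coe_le_norm _) (φ.norm_coe_le_norm _)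
      _ = 2 * ‖φ‖ := by ring

variable {A : ℕ → ℕ → Bool}

theorem aux_shift_iter (n : ℕ) (x : MarkovShift A) (i : ℕ) : (shift^[n] x).1 i = x.1 (i + n) := by
  induction n generalizing i with
  | zero => rfl
  | succ n ih =>
    rw [Function.iterate_succ_apply']
    change (shift^[n] x).1 (i + 1) = _
    rw [ih, Nat.add_right_comm, Nat.add_assoc]

theorem aux_emb : IsEmbedding (fun x : MarkovShift A => x.1) := IsEmbedding.subtypeVal

theorem aux_cont_coord (i : ℕ) : Continuous (fun x : MarkovShift A => x.1 i) :=
  (continuous_apply i).comp aux_emb.continuous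

theorem aux_cont_shift : Continuous (shift : MarkovShift A → MarkovShift A) := by
  rw [aux_emb.continuous_iff]
  exact continuous_pi fun i => aux_cont_coord (i + 1)


theorem aux_cyl_nhds (x : MarkovShift A) (N : ℕ) : ∀ᶠ y in 𝓝 x, ∀ i < N, y.1 i = x.1 i := by
  have : ∀ i ∈ Set.Iio N, ∀ᶠ y : MarkovShift A in 𝓝 x, y.1 i = x.1 i := fun i _ =>
    (aux_cont_coord i).continuousAt.eventually (isOpen_discrete {x.1 i} |>.mem_nhds rfl)
  exact (Filter.eventually_all_finite (Set.finite_Iio N)).2 this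

theorem aux_nhds_cyl (x : MarkovShift A) {P : MarkovShift A → Prop} (h : ∀ᶠ y in 𝓝 x, P y) :
    ∃ N, ∀ y : MarkovShift A, (∀ i < N, y.1 i = x.1 i) → P y := by
  rw [aux_emb.nhds_eq_comap, eventually_comap, nhds_pi] at h
  simp only [nhds_discrete] at h
  obtain ⟨I, hI, hI2⟩ := Filter.mem_pi_pure.1 h
  obtain ⟨N, hN⟩ := hI.bddAbove
  exact ⟨N + 1, fun y hy => hI2 _ (fun i hi => hy i (Nat.lt_succ_of_le (hN hi))) y rfl⟩

theorem aux_dist_lt (r : ℝ) (hr0 : 0 < r) (hr1 : r < 1) (N : ℕ) (x z : MarkovShift A)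
    (h : dist' r x z < r ^ N) : ∀ i < N, z.1 i = x.1 i := by
  unfold dist' at h
  split_ifs at h with hxz
  · subst hxz; simp
  · have h1 := (pow_lt_pow_iff_right_of_lt_one₀ hr0 hr1).1 h
    intro i hi
    have := Nat.find_min (Function.ne_iff.mp (fun hxy : x.1 = z.1 => hxz (Subtype.ext hxy)))
      (m := i) (hi.trans h1)
    simpa [eq_comm] using this

theorem aux_lt_dist (r : ℝ) (hr0 : 0 < r) (hr1 : r < 1) (ε : ℝ) (hε : 0 < ε) :
    ∃ N, ∀ x z : MarkovShift A, (∀ i < N, z.1 i = x.1 i) → dist' r x z < ε := by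
  obtain ⟨N, hN⟩ := exists_pow_lt_of_lt_one hε hr1
  refine ⟨N, fun x z h => ?_⟩
  unfold dist'
  split_ifs with hxz
  · exact hε
  · refine lt_of_le_of_lt (pow_le_pow_of_le_one hr0.le hr1.le ?_) hN
    refine (Nat.le_find_iff _ _).2 fun m hm => ?_
    simp [h m hm]

theorem aux_glue (x y : MarkovShift A) (n : ℕ) (h : y.1 0 = x.1 n) :
    ∃ z : MarkovShift A, (∀ i < n, z.1 i = x.1 i) ∧ shift^[n] z = y := by
  refine ⟨⟨fun i => if i < n then x.1 i else y.1 (i - n), fun i => ?_⟩, ?_, ?_⟩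
  · by_cases h1 : i + 1 < n
    · have h2 : i < n := by omega
      simpa [h1, h2] using x.2 i
    · by_cases h2 : i < n
      · have h3 : i + 1 - n = 0 := by omega
        have h4 : n = i + 1 := by omega
        simp only [h2, h1, if_true, if_false, h3, h]
        subst h4
        exact x.2 i
      · have h3 : i + 1 - n = i - n + 1 := by omega
        simp only [h1, h2, if_false, h3]
        exact y.2 _
  · intro i hi
    simp [hi]
  · apply Subtype.ext
    funext i
    refine (aux_shift_iter _ _ _).trans ?_
    simp

theorem aux_cont_f {f : MarkovShift A → ℝ} (hW : SatisfiesWalters f) : Continuous f := by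
  rw [continuous_iff_continuousAt]
  intro x
  rw [ContinuousAt, Metric.tendsto_nhds]
  intro ε hε
  have h1 := (hW.2.eventually (gt_mem_nhds hε)).and (eventually_ge_atTop 1)
  obtain ⟨k, hk, hk1⟩ := h1.exists
  filter_upwards [aux_cyl_nhds x (1 + k)] with y hy
  refine lt_of_le_of_lt ?_ hk
  refine le_csSup (hW.1 k hk1) ⟨1, le_rfl, y, x, hy, ?_⟩
  simp [birkhoff, Real.dist_eq]

theorem aux_walters {f : MarkovShift A → ℝ} (hW : SatisfiesWalters f) {δ : ℝ} (hδ : 0 < δ) :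
    ∃ k, ∀ k' ≥ k, ∀ n, ∀ x y : MarkovShift A, (∀ i < n + k', x.1 i = y.1 i) →
      |birkhoff f n x - birkhoff f n y| < δ := by
  have h1 := (hW.2.eventually (gt_mem_nhds hδ)).and (eventually_ge_atTop 1)
  obtain ⟨k, hk, hk1⟩ := h1.exists
  refine ⟨k, fun k' hk' n x y h => ?_⟩
  rcases Nat.eq_zero_or_pos n with rfl | hn
  · simpa [birkhoff] using hδ
  · exact lt_of_le_of_lt (le_csSup (hW.1 k hk1)
      ⟨n, hn, x, y, fun i hi => h i (by omega), rfl⟩) hk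

theorem aux_telescope (f V : MarkovShift A → ℝ) (m : ℝ) (n : ℕ) (z : MarkovShift A) :
    birkhoff (fun w => f w + V w - V (shift w) - m) n z =
      birkhoff (fun w => f w - m) n z + V z - V (shift^[n] z) := by
  unfold birkhoff
  induction n with
  | zero => simp
  | succ n ih =>
    rw [Finset.sum_range_succ, Finset.sum_range_succ, ih, Function.iterate_succ_apply']
    ring

theorem aux_periodic (b : ℕ) (l : List ℕ)
    (hc : List.IsChain (fun u v => A u v = true) ((b :: l) ++ [b])) :
    ∃ x : MarkovShift A, shift^[l.length + 1] x = x ∧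
      ∀ i, ∀ h : i < (b :: l).length, x.1 i = (b :: l)[i] := by
  have hlen : ∀ i, i % (l.length + 1) < (b :: l).length := fun i => by
    simpa using Nat.mod_lt i (Nat.succ_pos _)
  refine ⟨⟨fun i => (b :: l)[i % (l.length + 1)]'(hlen i), fun i => ?_⟩, ?_, ?_⟩
  · rw [List.isChain_iff_getElem] at hc
    have h0 := hlen i
    have := hc (i % (l.length + 1)) (by simp at h0 ⊢; omega)
    rw [List.getElem_append_left h0] at this
    by_cases h1 : i % (l.length + 1) + 1 < (b :: l).length
    · rw [List.getElem_append_left h1] at this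
      have h2 : (i + 1) % (l.length + 1) = i % (l.length + 1) + 1 := by
        rw [← Nat.mod_add_mod]; exact Nat.mod_eq_of_lt (by simpa using h1)
      simpa only [h2] using this
    · rw [List.getElem_append_right (by omega)] at this
      have h2 : (i + 1) % (l.length + 1) = 0 := by
        have h3 : i % (l.length + 1) + 1 = l.length + 1 := by
          simp at h0 h1; omega
        rw [← Nat.mod_add_mod, h3, Nat.mod_self]
      simpa [h2] using this
  · apply Subtype.ext
    funext i
    refine (aux_shift_iter _ _ _).trans ?_
    simp
  · intro i h
    have : i % (l.length + 1) = i := Nat.mod_eq_of_lt (by simpa using h)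
    simp [this]

end Aux

end MarkovShift

namespace MarkovShift

section Aux2

variable {A : ℕ → ℕ → Bool}

theorem aux_lower {f : MarkovShift A → ℝ} {D : ℝ}
    (hD : ∀ x y : MarkovShift A, x.1 0 = y.1 0 → f x - D ≤ f y) (F : Finset ℕ) :
    ∃ L : ℝ, ∀ y : MarkovShift A, y.1 0 ∈ F → L ≤ f y := by
  classical
  induction F using Finset.induction_on with
  | empty => exact ⟨0, by simp⟩
  | insert a s _ ih =>
    obtain ⟨L, hL⟩ := ih
    by_cases ha : ∃ x : MarkovShift A, x.1 0 = a
    · obtain ⟨x, hx⟩ := ha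
      refine ⟨min L (f x - D), fun y hy => ?_⟩
      rcases Finset.mem_insert.1 hy with h | h
      · exact (min_le_right _ _).trans (hD x y (hx.trans h.symm))
      · exact (min_le_left _ _).trans (hL y h)
    · refine ⟨L, fun y hy => ?_⟩
      rcases Finset.mem_insert.1 hy with h | h
      · exact (ha ⟨y, h⟩).elim
      · exact hL y h

theorem aux_finite_symbols (hbip : FinitelyPrimitive A) {f : MarkovShift A → ℝ}
    (hVar1 : Var1Finite f) {p : ℝ} (hP : HasGurevichPressure f p) (c : ℝ) :
    {a : ℕ | ∃ y : MarkovShift A, y.1 0 = a ∧ c ≤ f y}.Finite := by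
  classical
  by_contra hinf
  have hinf : Set.Infinite {a : ℕ | ∃ y : MarkovShift A, y.1 0 = a ∧ c ≤ f y} := hinf
  obtain ⟨b, y0, hb, -⟩ := hinf.nonempty
  have hbadm : Admissible A b := ⟨y0, hb⟩
  obtain ⟨K, F, hKF⟩ := hbip
  obtain ⟨D, hD⟩ := hVar1
  have hD' : ∀ x y : MarkovShift A, x.1 0 = y.1 0 → f x - D ≤ f y := by
    intro x y h
    have := hD ⟨x, y, fun i hi => by rw [Nat.lt_one_iff.1 hi]; exact h, rfl⟩
    simp only [birkhoff, Finset.range_one, Finset.sum_singleton, Function.iterate_zero, id] at this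
    linarith [le_abs_self (f x - f y)]
  obtain ⟨L, hL⟩ := aux_lower hD' (insert b F)
  have key : ∀ a : {a : ℕ | ∃ y : MarkovShift A, y.1 0 = a ∧ c ≤ f y},
      ∃ x : {x : MarkovShift A // shift^[2 * K + 2] x = x ∧ x.1 0 = b},
        x.1.1 (K + 1) = a ∧ (2 * K + 2 : ℕ) * min L (c - D) ≤ birkhoff f (2 * K + 2) x.1 := by
    rintro ⟨a, y, hy, hcy⟩
    obtain ⟨w, hw, hwF, hwc⟩ := hKF b a hbadm ⟨y, hy⟩
    obtain ⟨w', hw', hwF', hwc'⟩ := hKF a b ⟨y, hy⟩ hbadm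
    have hc : List.IsChain (fun u v => A u v = true) ((b :: (w ++ a :: w')) ++ [b]) := by
      have : (b :: (w ++ a :: w')) ++ [b] = (b :: w) ++ a :: (w' ++ [b]) := by simp
      rw [this, List.isChain_split]
      exact ⟨hwc, hwc'⟩
    obtain ⟨x, hx1, hx2⟩ := aux_periodic b _ hc
    have hlen : (w ++ a :: w').length + 1 = 2 * K + 2 := by simp; omega
    rw [hlen] at hx1
    have h0 : x.1 0 = b := by simpa using hx2 0 (by simp)
    refine ⟨⟨x, hx1, h0⟩, ?_, ?_⟩
    · have := hx2 (K + 1) (by simp; omega)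
      simpa [hw] using this
    · unfold birkhoff
      have := Finset.card_nsmul_le_sum (Finset.range (2 * K + 2)) (fun j => f (shift^[j] x))
        (min L (c - D)) ?_
      · simpa [nsmul_eq_mul] using this
      · intro j hj
        have hj' : j < (b :: (w ++ a :: w')).length := by
          simp at hj ⊢; omega
        have hs : (shift^[j] x).1 0 = x.1 j := by rw [aux_shift_iter, Nat.zero_add]
        have hmem := List.getElem_mem hj'
        rw [← hx2 j hj', ← hs] at hmem
        simp only [List.mem_cons, List.mem_append] at hmem
        rcases hmem with h | h | h | h
        · exact (min_le_left _ _).trans (hL _ (by simp [h]))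
        · exact (min_le_left _ _).trans (hL _ (by simp [hwF _ h]))
        · refine (min_le_right _ _).trans ?_
          have := hD' y (shift^[j] x) (hy.trans h.symm)
          linarith
        · exact (min_le_left _ _).trans (hL _ (by simp [hwF' _ h]))
  choose g hg1 hg2 using key
  have hginj : Function.Injective g := by
    intro a a' h
    apply Subtype.ext
    rw [← hg1 a, ← hg1 a', h]
  have hsum := ((hP b hbadm).1 (2 * K + 2) (by omega)).comp_injective hginj
  have : Infinite {a : ℕ | ∃ y : MarkovShift A, y.1 0 = a ∧ c ≤ f y} := hinf.to_subtype
  have hs2 := Summable.of_nonneg_of_le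
    (g := fun _ : {a : ℕ | ∃ y : MarkovShift A, y.1 0 = a ∧ c ≤ f y} =>
      Real.exp ((2 * K + 2 : ℕ) * min L (c - D)))
    (fun _ => (Real.exp_pos _).le) (fun a => Real.exp_le_exp.2 (hg2 a)) hsum
  rw [summable_const_iff] at hs2
  exact (Real.exp_pos _).ne' hs2

theorem aux_compact (F : Set ℕ) (hF : F.Finite) :
    IsCompact {x : MarkovShift A | ∀ i, x.1 i ∈ F} := by
  have h1 : IsClosed (Set.range (fun x : MarkovShift A => x.1)) := by
    have : Set.range (fun x : MarkovShift A => x.1) =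
        ⋂ i, {x : ℕ → ℕ | A (x i) (x (i + 1)) = true} := by
      ext y
      simp only [Set.mem_range, Set.mem_iInter, Set.mem_ofPred_eq]
      constructor
      · rintro ⟨x, rfl⟩
        exact x.2
      · intro h
        exact ⟨⟨y, h⟩, rfl⟩
    rw [this]
    refine isClosed_iInter fun i => ?_
    have hc : Continuous (fun x : ℕ → ℕ => (x i, x (i + 1))) := by fun_prop
    exact (isClosed_discrete {q : ℕ × ℕ | A q.1 q.2 = true}).preimage hc
  have h2 : IsClosedEmbedding (fun x : MarkovShift A => x.1) := ⟨aux_emb, h1⟩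
  have h3 := h2.isCompact_preimage (isCompact_univ_pi (fun _ : ℕ => hF.isCompact))
  convert h3 using 1
  ext x
  simp [Set.mem_pi]

theorem aux_measure {f V : MarkovShift A → ℝ} (hf : Continuous f) (hV : Continuous V)
    (C : Set (MarkovShift A)) (hC : IsCompact C) (hne : C.Nonempty)
    (hinv : ∀ x ∈ C, shift x ∈ C)
    (hg : ∀ x ∈ C, f x + V x - V (shift x) - mf f = 0) :
    ∃ ν : Measure (MarkovShift A), IsMaximizing f ν ∧ ν Cᶜ = 0 := by
  obtain ⟨x0, hx0⟩ := hne
  have : CompactSpace C := isCompact_iff_compactSpace.1 hC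
  have : TopologicalSpace.MetrizableSpace (MarkovShift A) := aux_emb.metrizableSpace
  have hmC : MeasurableSet C := hC.measurableSet
  let T : C → C := fun x => ⟨shift x.1, hinv _ x.2⟩
  have hT : Continuous T :=
    (aux_cont_shift.comp continuous_subtype_val).subtype_mk _
  obtain ⟨ν, hν, hνT⟩ := aux_krylov T hT ⟨x0, hx0⟩
  have hval : Measurable (Subtype.val : C → MarkovShift A) := measurable_subtype_coe
  have hint : ∀ φ : C → ℝ, Continuous φ → Integrable φ ν := fun φ hφ =>
    (BoundedContinuousFunction.mkOfCompact ⟨φ, hφ⟩).integrable ν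
  refine ⟨ν.map Subtype.val, ⟨⟨Measure.isProbabilityMeasure_map hval.aemeasurable, ?_⟩, ?_, ?_⟩, ?_⟩
  · rw [Measure.map_map aux_cont_shift.measurable hval]
    conv_rhs => rw [← hνT]
    rw [Measure.map_map hval hT.measurable]
    rfl
  · rw [integrable_map_measure hf.measurable.aestronglyMeasurable hval.aemeasurable]
    exact hint _ (hf.comp continuous_subtype_val)
  · rw [integral_map hval.aemeasurable hf.measurable.aestronglyMeasurable]
    have h1 : ∀ x : C, f x.1 = mf f + (V (T x).1 - V x.1) := by
      intro x
      have := hg x.1 x.2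
      simp only [T]
      linarith
    have hVc : Continuous (fun x : C => V x.1) := hV.comp continuous_subtype_val
    have h2 : ∫ x, V (T x).1 ∂ν = ∫ x : C, V x.1 ∂ν := by
      conv_rhs => rw [← hνT]
      rw [integral_map hT.measurable.aemeasurable hVc.measurable.aestronglyMeasurable]
    simp only [h1]
    have i1 : Integrable (fun x : C => V (T x).1) ν := hint _ (hVc.comp hT)
    have i2 : Integrable (fun x : C => V x.1) ν := hint _ hVc
    have i3 : Integrable (fun x : C => V (T x).1 - V x.1) ν := i1.sub i2
    have h3 : ∫ x : C, mf f + (V (T x).1 - V x.1) ∂ν = mf f := by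
      rw [integral_add (integrable_const _) i3, integral_sub i1 i2, h2]
      simp
    exact h3
  · rw [Measure.map_apply hval hmC.compl]
    simp

/-- Cluster sets of a calibrated sequence. -/
theorem aux_cluster {f V : MarkovShift A → ℝ} (hf : Continuous f) (hV : Continuous V)
    (K : Set (MarkovShift A)) (hK : IsCompact K) (u : ℕ → MarkovShift A) (huK : ∀ n, u n ∈ K)
    (hinv : ∀ p, MapClusterPt p atTop u → MapClusterPt (shift p) atTop u)
    (hg : ∀ n, f (u n) + V (u n) - V (shift (u n)) - mf f = 0) :
    ∃ ν : Measure (MarkovShift A), IsMaximizing f ν ∧ ν {p | MapClusterPt p atTop u}ᶜ = 0 := by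
  have : TopologicalSpace.MetrizableSpace (MarkovShift A) := aux_emb.metrizableSpace
  have hcl : IsClosed {p | MapClusterPt p atTop u} := isClosed_setOfPred_clusterPt
  have hgc : Continuous (fun x => f x + V x - V (shift x) - mf f) :=
    ((hf.add hV).sub (hV.comp aux_cont_shift)).sub continuous_const
  have hmemcl : ∀ (S : Set (MarkovShift A)), IsClosed S → (∀ n, u n ∈ S) →
      ∀ p, MapClusterPt p atTop u → p ∈ S := by
    intro S hS h p hp
    by_contra hpS
    obtain ⟨n, hn⟩ := (hp.frequently (hS.isOpen_compl.mem_nhds hpS)).exists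
    exact hn (h n)
  refine aux_measure hf hV _ (hK.of_isClosed_subset hcl fun p hp =>
    hmemcl K hK.isClosed huK p hp) ?_ hinv ?_
  · obtain ⟨p, -, hp⟩ := hK.exists_mapClusterPt (f := atTop) (u := u)
      (Filter.tendsto_principal.2 (Filter.Eventually.of_forall huK))
    exact ⟨p, hp⟩
  · exact hmemcl _ (isClosed_eq hgc continuous_const) hg

theorem aux_common (hbip : FinitelyPrimitive A) {f : MarkovShift A → ℝ}
    (hVar1 : Var1Finite f) {p : ℝ} (hP : HasGurevichPressure f p) (hf : Continuous f)
    (μmax : Measure (MarkovShift A)) (huniq : ∀ ν', IsMaximizing f ν' → ν' = μmax)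
    {V : MarkovShift A → ℝ} (hV : IsCalibratedSubaction f V) (x : MarkovShift A)
    (hx : ∀ j, f (shift^[j] x) + V (shift^[j] x) - V (shift (shift^[j] x)) - mf f = 0) :
    ∃ (q : MarkovShift A) (u : ℕ → MarkovShift A), (∀ k, shift^[k] (u k) = x) ∧
      (∀ k, birkhoff (fun w => f w - mf f) k (u k) = V x - V (u k)) ∧
      MapClusterPt q atTop u ∧ MapClusterPt q atTop (fun j => shift^[j] x) := by
  obtain ⟨hVc, ⟨C, hC⟩, -, hcal⟩ := hV
  choose b hb1 hb2 using hcal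
  let u : ℕ → MarkovShift A := fun k => b^[k] x
  have hu : ∀ k, shift (u (k + 1)) = u k := by
    intro k
    simp only [u, Function.iterate_succ_apply', hb1]
  have hus : ∀ k, shift^[k] (u k) = x := by
    intro k
    induction k with
    | zero => rfl
    | succ k ih => rw [Function.iterate_succ_apply, hu, ih]
  have hug : ∀ k, f (u k) + V (u k) - V (shift (u k)) - mf f = 0 := by
    intro k
    cases k with
    | zero => exact hx 0
    | succ k =>
      simp only [u, Function.iterate_succ_apply']
      exact hb2 _
  let F : Set ℕ := {a : ℕ | ∃ y : MarkovShift A, y.1 0 = a ∧ mf f - 2 * C ≤ f y}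
  have hF : F.Finite := aux_finite_symbols hbip hVar1 hP _
  have hmemF : ∀ y, f y + V y - V (shift y) - mf f = 0 → y.1 0 ∈ F := by
    intro y hy
    refine ⟨y, rfl, ?_⟩
    have h1 := abs_le.1 (hC y)
    have h2 := abs_le.1 (hC (shift y))
    linarith
  have hxF : ∀ i, x.1 i ∈ F := by
    intro i
    have := hmemF _ (hx i)
    rwa [aux_shift_iter, Nat.zero_add] at this
  have huF : ∀ k i, (u k).1 i ∈ F := by
    intro k
    induction k with
    | zero => exact hxF
    | succ k ih =>
      intro i
      cases i with
      | zero => exact hmemF _ (hug _)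
      | succ i =>
        have := ih i
        rw [← hu k] at this
        exact this
  have hK := aux_compact (A := A) F hF
  obtain ⟨ν1, hν1, hν1'⟩ := aux_cluster hf hVc _ hK u huF (by
    intro q hq
    have h1 := hq.continuousAt_comp (aux_cont_shift.continuousAt)
    rw [mapClusterPt_iff_frequently] at h1 ⊢
    intro s hs
    have h2 := h1 s hs
    rw [frequently_atTop] at h2 ⊢
    intro a
    obtain ⟨k, hk, hks⟩ := h2 (a + 1)
    refine ⟨k - 1, by omega, ?_⟩
    have : k = (k - 1) + 1 := by omega
    rw [this] at hks
    simpa [hu] using hks) hug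
  obtain ⟨ν2, hν2, hν2'⟩ := aux_cluster hf hVc _ hK (fun j => shift^[j] x) (by
      intro n i
      rw [aux_shift_iter]
      exact hxF _) (by
    intro q hq
    have h1 := hq.continuousAt_comp (aux_cont_shift.continuousAt)
    refine MapClusterPt.of_comp (φ := fun j => j + 1) (tendsto_add_atTop_nat 1) ?_
    convert h1 using 1
    funext j
    simp [Function.iterate_succ_apply']) hx
  have h12 : ν2 = ν1 := (huniq _ hν2).trans (huniq _ hν1).symm
  rw [h12] at hν2'
  have hunion := measure_union_null hν1' hν2'
  have hp := hν1.1.1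
  obtain ⟨q, hq⟩ : ∃ q, q ∉ ({p | MapClusterPt p atTop u}ᶜ ∪
      {p | MapClusterPt p atTop (fun j => shift^[j] x)}ᶜ) := by
    by_contra! hall
    rw [Set.eq_univ_of_forall hall, measure_univ] at hunion
    exact one_ne_zero hunion
  simp only [Set.mem_union, Set.mem_compl_iff, Set.mem_ofPred_eq, not_or, not_not] at hq
  refine ⟨q, u, hus, ?_, hq.1, hq.2⟩
  intro k
  have h1 := aux_telescope f V (mf f) k (u k)
  rw [hus] at h1
  have h2 : birkhoff (fun w => f w + V w - V (shift w) - mf f) k (u k) = 0 := by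
    unfold birkhoff
    refine Finset.sum_eq_zero fun j hj => ?_
    have h3 : ∀ j k, shift^[j] (u (j + k)) = u k := by
      intro j k
      induction j with
      | zero => simp
      | succ j ih =>
        rw [Function.iterate_succ_apply, Nat.add_right_comm, hu, ih]
    have h4 : shift^[j] (u k) = u (k - j) := by
      have := h3 j (k - j)
      rwa [Nat.add_sub_cancel' (Finset.mem_range.1 hj).le] at this
    rw [h4]
    exact hug _
  linarith

theorem aux_birk_add (f : MarkovShift A → ℝ) (n k : ℕ) (z : MarkovShift A) :
    birkhoff f (n + k) z = birkhoff f n z + birkhoff f k (shift^[n] z) := by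
  unfold birkhoff
  rw [Finset.sum_range_add]
  congr 1
  refine Finset.sum_congr rfl fun j _ => ?_
  rw [Nat.add_comm, Function.iterate_add_apply]

theorem aux_birk_const (f : MarkovShift A → ℝ) (m : ℝ) (n : ℕ) (z : MarkovShift A) :
    birkhoff (fun w => f w - m) n z = birkhoff f n z - n * m := by
  simp [birkhoff]

theorem aux_forward (r : ℝ) (hr0 : 0 < r) (hr1 : r < 1)
    {f : MarkovShift A → ℝ} (hf : Continuous f)
    {V : MarkovShift A → ℝ} (hV : IsCalibratedSubaction f V) (x : MarkovShift A)
    (h : 0 ≤ manePot r f x x) (j : ℕ) :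
    0 ≤ f (shift^[j] x) + V (shift^[j] x) - V (shift (shift^[j] x)) - mf f := by
  obtain ⟨hVc, -, hsub, -⟩ := hV
  have hgc : Continuous (fun x => f x + V x - V (shift x) - mf f) :=
    ((hf.add hVc).sub (hVc.comp aux_cont_shift)).sub continuous_const
  induction j using Nat.strong_induction_on with
  | _ j ih =>
  have hgj : Continuous (fun y => (fun x => f x + V x - V (shift x) - mf f) (shift^[j] y)) :=
    hgc.comp (aux_cont_shift.iterate j)
  refine le_of_forall_pos_le_add fun δ hδ => ?_
  have e1 : ∀ᶠ y in 𝓝 x, (f (shift^[j] y) + V (shift^[j] y) - V (shift (shift^[j] y)) - mf f) <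
      (f (shift^[j] x) + V (shift^[j] x) - V (shift (shift^[j] x)) - mf f) + δ / 2 :=
    hgj.continuousAt.eventually (gt_mem_nhds (lt_add_of_pos_right _ (by positivity)))
  have e2 : ∀ᶠ y in 𝓝 x, V x - δ / 4 < V y :=
    hVc.continuousAt.eventually (lt_mem_nhds (sub_lt_self _ (by positivity)))
  obtain ⟨N, hN⟩ := aux_nhds_cyl x (e1.and e2)
  have h1 := le_iInf_iff.1 h ⟨r ^ N, pow_pos hr0 N⟩
  have h2 : ((-(δ / 4) : ℝ) : EReal) < 0 := by
    rw [← EReal.coe_zero, EReal.coe_lt_coe_iff]; linarith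
  obtain ⟨⟨n, hn⟩, h3⟩ := lt_iSup_iff.1 (h2.trans_le h1)
  obtain ⟨⟨z, hz1, hz2⟩, h4⟩ := lt_iSup_iff.1 h3
  rw [EReal.coe_lt_coe_iff] at h4
  obtain ⟨k1, k2⟩ := hN z (aux_dist_lt r hr0 hr1 N x z hz1)
  have h5 := aux_telescope f V (mf f) n z
  simp only at hz2 h4
  rw [hz2] at h5
  have h6 : -(δ / 2) ≤ f (shift^[j] z) + V (shift^[j] z) - V (shift (shift^[j] z)) - mf f := by
    by_cases hj : j < n
    · have := Finset.single_le_sum (s := Finset.range n)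
        (f := fun i => -(f (shift^[i] z) + V (shift^[i] z) - V (shift (shift^[i] z)) - mf f))
        (fun i _ => neg_nonneg.2 (hsub _)) (Finset.mem_range.2 hj)
      rw [Finset.sum_neg_distrib] at this
      unfold birkhoff at h5 h4
      linarith
    · have h7 : shift^[j] z = shift^[j - n] x := by
        rw [← hz2, ← Function.iterate_add_apply, Nat.sub_add_cancel (by omega)]
      rw [h7]
      have := ih (j - n) (by omega)
      linarith
  linarith

theorem aux_mane_le (r : ℝ) (hr0 : 0 < r) (hr1 : r < 1)
    {f : MarkovShift A → ℝ}
    {V : MarkovShift A → ℝ} (hV : IsCalibratedSubaction f V) (x : MarkovShift A) :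
    manePot r f x x ≤ 0 := by
  obtain ⟨hVc, -, hsub, -⟩ := hV
  refine EReal.le_of_forall_lt_iff_le.1 fun δ hδ => ?_
  have hδ : 0 < δ := by exact_mod_cast hδ
  have e2 : ∀ᶠ y in 𝓝 x, V x - δ < V y :=
    hVc.continuousAt.eventually (lt_mem_nhds (sub_lt_self _ hδ))
  obtain ⟨N, hN⟩ := aux_nhds_cyl x e2
  refine (iInf_le _ ⟨r ^ N, pow_pos hr0 N⟩).trans ?_
  refine iSup_le fun n => iSup_le fun z => ?_
  rw [EReal.coe_le_coe_iff]
  have h5 := aux_telescope f V (mf f) n.1 z.1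
  rw [z.2.2] at h5
  have h6 : birkhoff (fun w => f w + V w - V (shift w) - mf f) n.1 z.1 ≤ 0 :=
    Finset.sum_nonpos fun i _ => hsub _
  have := hN z.1 (aux_dist_lt r hr0 hr1 N x z.1 z.2.1)
  linarith

theorem aux_mane_ge (hbip : FinitelyPrimitive A) (r : ℝ) (hr0 : 0 < r) (hr1 : r < 1)
    {f : MarkovShift A → ℝ} (hW : SatisfiesWalters f)
    (hVar1 : Var1Finite f) {p : ℝ} (hP : HasGurevichPressure f p)
    (μmax : Measure (MarkovShift A)) (huniq : ∀ ν', IsMaximizing f ν' → ν' = μmax)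
    {V : MarkovShift A → ℝ} (hV : IsCalibratedSubaction f V) (x : MarkovShift A)
    (hx : ∀ j, f (shift^[j] x) + V (shift^[j] x) - V (shift (shift^[j] x)) - mf f = 0) :
    0 ≤ manePot r f x x := by
  have hf := aux_cont_f hW
  obtain ⟨q, u, hu1, hu2, hq1, hq2⟩ := aux_common hbip hVar1 hP hf μmax huniq hV x hx
  refine le_iInf fun ε => ?_
  refine EReal.ge_of_forall_gt_iff_ge.1 fun δ hδ => ?_
  have hδ : δ < 0 := by exact_mod_cast hδ
  have hδ' : 0 < -δ / 3 := by linarith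
  obtain ⟨k0, hk0⟩ := aux_walters hW hδ'
  obtain ⟨N0, hN0⟩ := aux_lt_dist (A := A) r hr0 hr1 ε.1 ε.2
  have eN := aux_cyl_nhds q (k0 + N0 + 1)
  have eV : ∀ᶠ y in 𝓝 q, |V y - V q| < -δ / 3 := by
    have := hV.1.continuousAt (x := q)
    exact Metric.tendsto_nhds.1 this _ hδ'
  obtain ⟨n, hn1, hn2⟩ := (hq2.frequently (eN.and eV)).exists
  obtain ⟨k, ⟨hk1, hk2⟩, hk⟩ :=
    ((hq1.frequently (eN.and eV)).and_eventually (eventually_ge_atTop 1)).exists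
  have hag : ∀ i < k0 + N0 + 1, (u k).1 i = x.1 (i + n) := by
    intro i hi
    rw [hk1 i hi, ← hn1 i hi, aux_shift_iter]
  obtain ⟨z, hz1, hz2⟩ := aux_glue x (u k) n (by rw [hag 0 (by omega), Nat.zero_add])
  have hzx : ∀ i < n + (k0 + N0 + 1), z.1 i = x.1 i := by
    intro i hi
    by_cases h : i < n
    · exact hz1 i h
    · have h1 := hag (i - n) (by omega)
      rw [← hz2, aux_shift_iter, Nat.sub_add_cancel (by omega)] at h1
      exact h1
  have hσ : shift^[n + k] z = x := by
    rw [Nat.add_comm, Function.iterate_add_apply, hz2, hu1]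
  have hw := abs_lt.1 (hk0 _ (by omega) n z x hzx)
  have ht := aux_telescope f V (mf f) n x
  have h0 : birkhoff (fun w => f w + V w - V (shift w) - mf f) n x = 0 :=
    Finset.sum_eq_zero fun j _ => hx j
  have hadd := aux_birk_add (fun w => f w - mf f) n k z
  rw [hz2, hu2, aux_birk_const f (mf f) n z] at hadd
  rw [aux_birk_const f (mf f) n x] at ht
  have hn3 := abs_lt.1 hn2
  have hk3 := abs_lt.1 hk2
  refine le_trans ?_ (le_iSup_of_le (⟨n + k, by omega⟩ : {n : ℕ // 1 ≤ n})
    (le_iSup_of_le ⟨z, hN0 x z (fun i hi => hzx i (by omega)), hσ⟩ le_rfl))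
  rw [EReal.coe_le_coe_iff, hadd]
  linarith

end Aux2

end MarkovShift

namespace MarkovShift

/-- The Aubry set coincides with the zero set of the deviation function:
`Ω(f,σ) = {x : I(x) = 0}` where `I(x) = -Σ_j (f + V - V∘σ - m(f))(σʲ x)`. -/
theorem aubry_eq_zero_set_of_deviation
    (A : ℕ → ℕ → Bool) (r : ℝ) (hr0 : 0 < r) (hr1 : r < 1)
    (hmix : TopologicallyMixing A)
    (hbip : FinitelyPrimitive A)
    (f : MarkovShift A → ℝ)
    (hWalters : SatisfiesWalters f)
    (hVar1 : Var1Finite f)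
    (p : ℝ)
    (hPfin : HasGurevichPressure f p)
    (μmax : Measure (MarkovShift A))
    (hmax : IsMaximizing f μmax)
    (huniq : ∀ ν', IsMaximizing f ν' → ν' = μmax)
    (V : MarkovShift A → ℝ)
    (hV : IsCalibratedSubaction f V) :
    {x : MarkovShift A | manePot r f x x = 0} =
      {x : MarkovShift A |
        (∑' j : ℕ, ENNReal.ofReal
          (-(f (shift^[j] x) + V (shift^[j] x) - V (shift (shift^[j] x)) - mf f))) = 0} := by
  have hf := aux_cont_f hWalters
  ext x
  simp only [Set.mem_ofPred_eq, ENNReal.tsum_eq_zero, ENNReal.ofReal_eq_zero, neg_nonpos]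
  constructor
  · intro h j
    exact aux_forward r hr0 hr1 hf hV x h.ge j
  · intro h
    exact le_antisymm (aux_mane_le r hr0 hr1 hV x)
      (aux_mane_ge hbip r hr0 hr1 hWalters hVar1 hPfin μmax huniq hV x
        (fun j => le_antisymm (hV.2.2.1 _) (h j)))

end MarkovShift
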